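/- Let n, m be integers with 2 ≤ n < m. Define G = −10 − 21m − 14m^2 − 21n − 18mn − 14n^2 + 8m^2 n^2, H = −22 − 22m − 22n − 15mn − 10m^2 n − 10mn^2 + 20m^2 n^2, F = −28 − 130m − 170m^2 − 68m^3 − 130n − 372mn − 93m^2 n + 228m^3 n + 76m^4 n − 170n^2 − 93mn^2 + 610m^2 n^2 + 300m^3 n^2 − 152m^4 n^2 − 68n^3 + 228mn^3 + 300m^2 n^3 − 192m^3 n^3 − 16m^4 n^3 + 76mn^4 − 152m^2 n^4 − 16m^3 n^4 + 32m^4 n^4, and set c* = −mn(4mn − 2m − 2n − 3)/(1 + m + n) and λ* = −(1 + m + n)·F / (7(2mn − m − 1)(2mn − n − 1)·G·H). Then G ≠ 0, H ≠ 0, and p_n(c*, λ*) = 0 and p_m(c*, λ*) = 0. -/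

import Mathlib

/-- The polynomial `f(c,n)` from the type-C truncation polynomial. -/
noncomputable def fC (c n : ℂ) : ℂ :=
  -204 * c ^ 2 - 192 * c ^ 3 + 171 * c ^ 4 + 952 * c * n - 4612 * c ^ 2 * n
    + 2348 * c ^ 3 * n - 38 * c ^ 4 * n + 1568 * n ^ 2 - 7708 * c * n ^ 2
    + 1788 * c ^ 2 * n ^ 2 + 2401 * c ^ 3 * n ^ 2 - 74 * c ^ 4 * n ^ 2
    + 560 * n ^ 3 - 18936 * c * n ^ 3 + 22280 * c ^ 2 * n ^ 3
    - 2112 * c ^ 3 * n ^ 3 + 8 * c ^ 4 * n ^ 3 - 16304 * n ^ 4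
    + 18640 * c * n ^ 4 + 3420 * c ^ 2 * n ^ 4 - 364 * c ^ 3 * n ^ 4
    + 8 * c ^ 4 * n ^ 4 - 17408 * n ^ 5 + 27680 * c * n ^ 5
    - 10576 * c ^ 2 * n ^ 5 + 304 * c ^ 3 * n ^ 5 - 3264 * n ^ 6
    - 3072 * c * n ^ 6 + 2736 * c ^ 2 * n ^ 6

/-- The polynomial `g(c,n)` from the type-C truncation polynomial. -/
noncomputable def gC (c n : ℂ) : ℂ :=
  -14 * (c - 1) * (2 * c - 1) * (22 + 5 * c) * (n - 2) * (n - 1)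
    * (3 * c + 10 * n + 2 * c * n + 12 * n ^ 2)
    * (5 * c + 28 * n + 2 * c * n + 40 * n ^ 2)

/-- The polynomial `h(c,n)` from the type-C truncation polynomial. -/
noncomputable def hC (c n : ℂ) : ℂ :=
  49 * (c - 1) ^ 2 * (22 + 5 * c) ^ 2
    * (21 * c ^ 2 + 70 * c * n - 14 * c ^ 2 * n + 200 * n ^ 2 - 135 * c * n ^ 2
      - 26 * c ^ 2 * n ^ 2 + 380 * n ^ 3 - 176 * c * n ^ 3 + 8 * c ^ 2 * n ^ 3
      + 436 * n ^ 4 + 132 * c * n ^ 4 + 8 * c ^ 2 * n ^ 4 + 448 * n ^ 5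
      + 112 * c * n ^ 5 + 336 * n ^ 6)

/-- The type-C truncation polynomial `p_n(c,λ) = f(c,n) + λ·g(c,n) + λ²·h(c,n)`. -/
noncomputable def pC (n c lam : ℂ) : ℂ := fC c n + lam * gC c n + lam ^ 2 * hC c n

/-!
With `u = 7 (c - 1) (22 + 5c) λ`, the polynomial `p_n(c, λ)` is a quadratic in `u` whose
coefficients have degree at most four in `c`. At `c = c*(n, m)` these coefficients factor, and
with `s = 1 + m + n` the quadratic splits over the field of rational functions in `n` and `m`:
`p_n(c*, λ) = n² (s G u + F) (s Q u + R) / s⁴`. Here `G` and `F` are symmetric in `n` and `m`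
(whereas the cofactors `Q` and `R` are not), so the root `u = -F / (s G)` is common to `p_n` and
`p_m`. Since `c* - 1` and `22 + 5c*` factor as well, that root is `λ = λ*`, provided that no
denominator vanishes. Over the positive integers, `G` and `H` are positive once `n, m ≥ 3`; for
`n = 1, 2` they are products of linear forms in `m` without positive integer roots, except that
`H(2, m)` is twice an odd number.
-/

/-- The normalization `u = 7 (c - 1) (22 + 5c) λ` of the parameter `λ`, which removes the common
factors of the coefficients of `p_n`. -/
noncomputable def normalizedLam (c lam : ℂ) : ℂ := 7 * (c - 1) * (22 + 5 * c) * lam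

/-- The linear coefficient of `p_n` as a polynomial in `u`, up to the factor `-2`. -/
noncomputable def gReduced (c n : ℂ) : ℂ :=
  (2 * c - 1) * (n - 2) * (n - 1) * (3 * c + 10 * n + 2 * c * n + 12 * n ^ 2)
    * (5 * c + 28 * n + 2 * c * n + 40 * n ^ 2)

/-- The leading coefficient of `p_n` as a polynomial in `u`. -/
noncomputable def hReduced (c n : ℂ) : ℂ :=
  21 * c ^ 2 + 70 * c * n - 14 * c ^ 2 * n + 200 * n ^ 2 - 135 * c * n ^ 2
    - 26 * c ^ 2 * n ^ 2 + 380 * n ^ 3 - 176 * c * n ^ 3 + 8 * c ^ 2 * n ^ 3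
    + 436 * n ^ 4 + 132 * c * n ^ 4 + 8 * c ^ 2 * n ^ 4 + 448 * n ^ 5
    + 112 * c * n ^ 5 + 336 * n ^ 6

theorem pC_eq_quadratic (n c lam : ℂ) :
    pC n c lam = fC c n - 2 * normalizedLam c lam * gReduced c n
      + normalizedLam c lam ^ 2 * hReduced c n := by
  unfold pC gC hC normalizedLam gReduced hReduced
  ring

/-- The factor `G` of the denominator of `λ*`, over an arbitrary ring because its nonvanishing
is decided over `ℤ`. -/
def secondPointG {R : Type*} [CommRing R] (n m : R) : R :=
  -10 - 21 * m - 14 * m ^ 2 - 21 * n - 18 * m * n - 14 * n ^ 2 + 8 * m ^ 2 * n ^ 2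

/-- The factor `H` of the denominator of `λ*`, over an arbitrary ring like `secondPointG`. -/
def secondPointH {R : Type*} [CommRing R] (n m : R) : R :=
  -22 - 22 * m - 22 * n - 15 * m * n - 10 * m ^ 2 * n - 10 * m * n ^ 2 + 20 * m ^ 2 * n ^ 2

/-- The polynomial `F` in the numerator of `λ*`. -/
noncomputable def secondPointF (n m : ℂ) : ℂ :=
  -28 - 130 * m - 170 * m ^ 2 - 68 * m ^ 3 - 130 * n
    - 372 * m * n - 93 * m ^ 2 * n + 228 * m ^ 3 * n + 76 * m ^ 4 * n
    - 170 * n ^ 2 - 93 * m * n ^ 2 + 610 * m ^ 2 * n ^ 2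
    + 300 * m ^ 3 * n ^ 2 - 152 * m ^ 4 * n ^ 2 - 68 * n ^ 3
    + 228 * m * n ^ 3 + 300 * m ^ 2 * n ^ 3 - 192 * m ^ 3 * n ^ 3
    - 16 * m ^ 4 * n ^ 3 + 76 * m * n ^ 4 - 152 * m ^ 2 * n ^ 4
    - 16 * m ^ 3 * n ^ 4 + 32 * m ^ 4 * n ^ 4

/-- The coordinate `c*` of the second intersection point. -/
noncomputable def secondPointC (n m : ℂ) : ℂ :=
  -m * n * (4 * m * n - 2 * m - 2 * n - 3) / (1 + m + n)

/-- The coordinate `λ*` of the second intersection point. -/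
noncomputable def secondPointLam (n m : ℂ) : ℂ :=
  -(1 + m + n) * secondPointF n m
    / (7 * (2 * m * n - m - 1) * (2 * m * n - n - 1) * secondPointG n m * secondPointH n m)

/-- The polynomial `Q` of the second factor `s Q u + R` of `p_n` along `c = c*`. -/
noncomputable def cofactorQ (n m : ℂ) : ℂ :=
  2 * (2 * n - 1) ^ 2 * (2 * n ^ 2 + 2 * n - 3) * m ^ 2
    - (n + 1) * (2 * n - 1) * (8 * n ^ 2 + 22 * n - 19) * m
    - 4 * (n + 1) ^ 2 * (6 * n ^ 2 - n + 5)

/-- The polynomial `R` of the second factor `s Q u + R` of `p_n` along `c = c*`. -/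
noncomputable def cofactorR (n m : ℂ) : ℂ :=
  4 * n * (2 * n - 1) ^ 3 * (2 * n ^ 2 + 2 * n - 9) * m ^ 4
    - 2 * (2 * n - 1) ^ 2 * (12 * n ^ 4 + 64 * n ^ 3 - 113 * n ^ 2 - 174 * n - 6) * m ^ 3
    - (n + 1) * (2 * n - 1) * (128 * n ^ 4 - 348 * n ^ 3 + 260 * n ^ 2 + 873 * n + 2) * m ^ 2
    + 2 * (n + 1) ^ 2 * (72 * n ^ 4 - 264 * n ^ 3 - 178 * n ^ 2 + 404 * n - 33) * m
    + 8 * (n + 1) ^ 3 * (6 * n ^ 2 + 23 * n - 7)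

section Symmetry

theorem secondPointG_comm {R : Type*} [CommRing R] (n m : R) :
    secondPointG n m = secondPointG m n := by
  unfold secondPointG
  ring

theorem secondPointH_comm {R : Type*} [CommRing R] (n m : R) :
    secondPointH n m = secondPointH m n := by
  unfold secondPointH
  ring

theorem secondPointF_comm (n m : ℂ) : secondPointF n m = secondPointF m n := by
  unfold secondPointF
  ring

theorem secondPointC_comm (n m : ℂ) : secondPointC n m = secondPointC m n := by
  unfold secondPointC
  ring

theorem secondPointLam_comm (n m : ℂ) : secondPointLam n m = secondPointLam m n := by
  unfold secondPointLam
  rw [secondPointF_comm, secondPointG_comm, secondPointH_comm]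
  ring

end Symmetry

section Curve

variable {n m : ℂ} (hs : 1 + m + n ≠ 0)
include hs

theorem secondPointC_sub_one :
    secondPointC n m - 1
      = -((2 * m * n - m - 1) * (2 * m * n - n - 1)) / (1 + m + n) := by
  unfold secondPointC
  field_simp
  ring

theorem add_five_mul_secondPointC :
    22 + 5 * secondPointC n m = -secondPointH n m / (1 + m + n) := by
  unfold secondPointC secondPointH
  field_simp
  ring

theorem two_mul_secondPointC_sub_one :
    2 * secondPointC n m - 1
      = -((2 * m * n - m - n - 1) * (4 * m * n - 1)) / (1 + m + n) := by
  unfold secondPointC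
  field_simp
  ring

theorem gReduced_secondPointC :
    gReduced (secondPointC n m) n
      = -n ^ 2 * (secondPointF n m * cofactorQ n m + secondPointG n m * cofactorR n m)
        / (2 * (1 + m + n) ^ 3) := by
  have factor₃ : 3 * secondPointC n m + 10 * n + 2 * secondPointC n m * n + 12 * n ^ 2
      = -(n * ((4 * n - 2) * m - (6 * n + 5)) * ((2 * n + 3) * m + 2 * (n + 1)))
        / (1 + m + n) := by
    unfold secondPointC
    field_simp
    ring
  have factor₅ : 5 * secondPointC n m + 28 * n + 2 * secondPointC n m * n + 40 * n ^ 2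
      = -(n * ((4 * n - 2) * m - (10 * n + 7)) * ((2 * n + 5) * m + 4 * (n + 1)))
        / (1 + m + n) := by
    unfold secondPointC
    field_simp
    ring
  unfold gReduced
  rw [two_mul_secondPointC_sub_one hs, factor₃, factor₅]
  unfold secondPointF secondPointG cofactorQ cofactorR
  field_simp
  ring

theorem hReduced_secondPointC :
    hReduced (secondPointC n m) n
      = n ^ 2 * secondPointG n m * cofactorQ n m / (1 + m + n) ^ 2 := by
  unfold hReduced secondPointC secondPointG cofactorQ
  field_simp
  ring

theorem fC_secondPointC :
    fC (secondPointC n m) n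
      = n ^ 2 * secondPointF n m * cofactorR n m / (1 + m + n) ^ 4 := by
  unfold fC secondPointC secondPointF cofactorR
  field_simp
  ring

theorem pC_secondPointC (lam : ℂ) :
    pC n (secondPointC n m) lam
      = n ^ 2
        * ((1 + m + n) * secondPointG n m * normalizedLam (secondPointC n m) lam
            + secondPointF n m)
        * ((1 + m + n) * cofactorQ n m * normalizedLam (secondPointC n m) lam
            + cofactorR n m)
        / (1 + m + n) ^ 4 := by
  rw [pC_eq_quadratic, fC_secondPointC hs, gReduced_secondPointC hs, hReduced_secondPointC hs]
  field_simp
  ring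

variable (hA : 2 * m * n - m - 1 ≠ 0) (hB : 2 * m * n - n - 1 ≠ 0)
  (hG : secondPointG n m ≠ 0) (hH : secondPointH n m ≠ 0)
include hA hB hG hH

theorem normalizedLam_secondPoint :
    normalizedLam (secondPointC n m) (secondPointLam n m)
      = -secondPointF n m / ((1 + m + n) * secondPointG n m) := by
  unfold normalizedLam secondPointLam
  rw [secondPointC_sub_one hs, add_five_mul_secondPointC hs]
  -- `field_simp` would factor these two expressions and then miss `hA` and `hB`.
  generalize 2 * m * n - m - 1 = A at hA ⊢
  generalize 2 * m * n - n - 1 = B at hB ⊢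
  field_simp

theorem pC_secondPoint_left : pC n (secondPointC n m) (secondPointLam n m) = 0 := by
  have root : (1 + m + n) * secondPointG n m
      * normalizedLam (secondPointC n m) (secondPointLam n m) + secondPointF n m = 0 := by
    rw [normalizedLam_secondPoint hs hA hB hG hH]
    field_simp
    ring
  rw [pC_secondPointC hs, root]
  ring

theorem pC_secondPoint_right : pC m (secondPointC n m) (secondPointLam n m) = 0 := by
  rw [secondPointC_comm, secondPointLam_comm]
  apply pC_secondPoint_left
  · rwa [add_right_comm]
  · rwa [mul_right_comm]
  · rwa [mul_right_comm]
  · rwa [secondPointG_comm]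
  · rwa [secondPointH_comm]

end Curve

section Nonvanishing

theorem secondPointG_one_left {R : Type*} [CommRing R] (m : R) :
    secondPointG 1 m = -3 * (2 * m + 3) * (m + 5) := by
  unfold secondPointG
  ring

theorem secondPointG_two_left {R : Type*} [CommRing R] (m : R) :
    secondPointG 2 m = 3 * (2 * m - 9) * (3 * m + 4) := by
  unfold secondPointG
  ring

theorem secondPointH_one_left {R : Type*} [CommRing R] (m : R) :
    secondPointH 1 m = (2 * m - 11) * (5 * m + 4) := by
  unfold secondPointH
  ring

theorem secondPointH_two_left {R : Type*} [CommRing R] (m : R) :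
    secondPointH 2 m = 2 * (2 * (15 * m ^ 2 - 23 * m - 17) + 1) := by
  unfold secondPointH
  ring

@[norm_cast]
theorem intCast_secondPointG {R : Type*} [CommRing R] (n m : ℤ) :
    ((secondPointG n m : ℤ) : R) = secondPointG (n : R) m := by
  unfold secondPointG
  push_cast
  rfl

@[norm_cast]
theorem intCast_secondPointH {R : Type*} [CommRing R] (n m : ℤ) :
    ((secondPointH n m : ℤ) : R) = secondPointH (n : R) m := by
  unfold secondPointH
  push_cast
  rfl

variable {n m : ℤ}

theorem secondPointG_pos (hn : 3 ≤ n) (hm : 3 ≤ m) : 0 < secondPointG n m := by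
  obtain ⟨a, rfl⟩ := Int.le.dest hn
  obtain ⟨b, rfl⟩ := Int.le.dest hm
  unfold secondPointG
  ring_nf
  positivity

theorem secondPointH_pos (hn : 3 ≤ n) (hm : 3 ≤ m) : 0 < secondPointH n m := by
  obtain ⟨a, rfl⟩ := Int.le.dest hn
  obtain ⟨b, rfl⟩ := Int.le.dest hm
  unfold secondPointH
  ring_nf
  positivity

theorem secondPointG_ne_zero (hn : 1 ≤ n) (hm : 1 ≤ m) : secondPointG n m ≠ 0 := by
  wlog hnm : n ≤ m generalizing n m
  · rw [secondPointG_comm]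
    exact this hm hn (by omega)
  obtain rfl | rfl | hn : n = 1 ∨ n = 2 ∨ 3 ≤ n := by omega
  · rw [secondPointG_one_left]
    refine mul_ne_zero (mul_ne_zero ?_ ?_) ?_ <;> omega
  · rw [secondPointG_two_left]
    refine mul_ne_zero (mul_ne_zero ?_ ?_) ?_ <;> omega
  · exact (secondPointG_pos hn (hn.trans hnm)).ne'

theorem secondPointH_ne_zero (hn : 1 ≤ n) (hm : 1 ≤ m) : secondPointH n m ≠ 0 := by
  wlog hnm : n ≤ m generalizing n m
  · rw [secondPointH_comm]
    exact this hm hn (by omega)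
  obtain rfl | rfl | hn : n = 1 ∨ n = 2 ∨ 3 ≤ n := by omega
  · rw [secondPointH_one_left]
    refine mul_ne_zero ?_ ?_ <;> omega
  · rw [secondPointH_two_left]
    omega
  · exact (secondPointH_pos hn (hn.trans hnm)).ne'

end Nonvanishing

theorem typeC_second_intersection_point_general {n m : ℤ} (hn : 1 ≤ n) (hm : 2 ≤ m) :
    secondPointG (n : ℂ) m ≠ 0 ∧ secondPointH (n : ℂ) m ≠ 0 ∧
      pC n (secondPointC n m) (secondPointLam n m) = 0 ∧
      pC m (secondPointC n m) (secondPointLam n m) = 0 := by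
  have hG : secondPointG (n : ℂ) m ≠ 0 := by
    exact_mod_cast secondPointG_ne_zero hn (by omega)
  have hH : secondPointH (n : ℂ) m ≠ 0 := by
    exact_mod_cast secondPointH_ne_zero hn (by omega)
  have hs : (1 + m + n : ℂ) ≠ 0 := by
    exact_mod_cast (by omega : 1 + m + n ≠ 0)
  have hA : (2 * m * n - m - 1 : ℂ) ≠ 0 := by
    exact_mod_cast (by nlinarith : 0 < 2 * m * n - m - 1).ne'
  have hB : (2 * m * n - n - 1 : ℂ) ≠ 0 := by
    exact_mod_cast (by nlinarith : 0 < 2 * m * n - n - 1).ne'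
  exact ⟨hG, hH, pC_secondPoint_left hs hA hB hG hH, pC_secondPoint_right hs hA hB hG hH⟩

/-- The second nontrivial intersection point of the type-C truncation curves
`V(I_n)` and `V(I_m)` lies on both curves. -/
theorem typeC_second_intersection_point (n m : ℤ) (hn : 2 ≤ n) (hnm : n < m)
    (nn mm : ℂ) (hnn : nn = (n : ℂ)) (hmm : mm = (m : ℂ))
    (G H F cs ls : ℂ)
    (hG : G = -10 - 21 * mm - 14 * mm ^ 2 - 21 * nn - 18 * mm * nn - 14 * nn ^ 2
      + 8 * mm ^ 2 * nn ^ 2)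
    (hH : H = -22 - 22 * mm - 22 * nn - 15 * mm * nn - 10 * mm ^ 2 * nn
      - 10 * mm * nn ^ 2 + 20 * mm ^ 2 * nn ^ 2)
    (hF : F = -28 - 130 * mm - 170 * mm ^ 2 - 68 * mm ^ 3 - 130 * nn
      - 372 * mm * nn - 93 * mm ^ 2 * nn + 228 * mm ^ 3 * nn + 76 * mm ^ 4 * nn
      - 170 * nn ^ 2 - 93 * mm * nn ^ 2 + 610 * mm ^ 2 * nn ^ 2
      + 300 * mm ^ 3 * nn ^ 2 - 152 * mm ^ 4 * nn ^ 2 - 68 * nn ^ 3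
      + 228 * mm * nn ^ 3 + 300 * mm ^ 2 * nn ^ 3 - 192 * mm ^ 3 * nn ^ 3
      - 16 * mm ^ 4 * nn ^ 3 + 76 * mm * nn ^ 4 - 152 * mm ^ 2 * nn ^ 4
      - 16 * mm ^ 3 * nn ^ 4 + 32 * mm ^ 4 * nn ^ 4)
    (hcs : cs = -mm * nn * (4 * mm * nn - 2 * mm - 2 * nn - 3) / (1 + mm + nn))
    (hls : ls = -(1 + mm + nn) * F
        / (7 * (2 * mm * nn - mm - 1) * (2 * mm * nn - nn - 1) * G * H)) :
    G ≠ 0 ∧ H ≠ 0 ∧ pC nn cs ls = 0 ∧ pC mm cs ls = 0 := by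
  subst hnn hmm hG hH hF hcs hls
  exact typeC_second_intersection_point_general (by omega) (by omega)
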